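/- Let n ≥ 2 and let f : {0,1}^n → {0,1} be a local rule of width n. If f is both (2n−3)-conservative and (2n−2)-conservative, then f is L-conservative for every integer L > 0. -/

import Mathlib

/-- A local rule `f` of width `n` is `L`-conservative if for every `L`-periodic
bisequence `x : ℤ → Fin 2`, the sum of `f` applied to the `n`-blocks starting at
positions `1,…,L` equals the sum of `x` over positions `1,…,L`. -/
def LCons (n : ℕ) (f : (Fin n → Fin 2) → Fin 2) (L : ℕ) : Prop :=
  ∀ x : ℤ → Fin 2, (∀ i : ℤ, x (i + L) = x i) →
    (∑ i ∈ Finset.range L, (f (fun k => x ((i : ℤ) + 1 + (k : ℕ)))).val) =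
      ∑ i ∈ Finset.range L, (x ((i : ℤ) + 1)).val

theorem shift_sum (L : ℕ) (h : ℤ → ℤ) (hp : ∀ i, h (i + L) = h i) (c : ℤ) :
    ∑ i ∈ Finset.range L, h ((i : ℤ) + c) = ∑ i ∈ Finset.range L, h (i : ℤ) := by
  have step : ∀ c : ℤ, ∑ i ∈ Finset.range L, h ((i : ℤ) + (c + 1)) =
      ∑ i ∈ Finset.range L, h ((i : ℤ) + c) := by
    intro c
    have e1 := Finset.sum_range_succ (fun i : ℕ => h ((i : ℤ) + c)) L
    have e2 := Finset.sum_range_succ' (fun i : ℕ => h ((i : ℤ) + c)) L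
    have e3 : h ((L : ℤ) + c) = h (((0 : ℕ) : ℤ) + c) := by
      rw [add_comm, hp]; simp
    have e4 : ∑ i ∈ Finset.range L, h ((i : ℤ) + (c + 1)) =
        ∑ i ∈ Finset.range L, h (((i + 1 : ℕ) : ℤ) + c) := by
      refine Finset.sum_congr rfl fun i _ => ?_
      congr 1; push_cast; ring
    linarith
  induction c using Int.induction_on with
  | zero => simp
  | succ k ih => rw [step, ih]
  | pred k ih => rw [← ih, ← step (-(k : ℤ) - 1)]; simp

/-- Defect `f(y_0..y_{n-1}) - y_0`. -/
def GG (n : ℕ) (f : (Fin n → Fin 2) → Fin 2) (y : ℤ → Fin 2) : ℤ :=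
  ((f (fun k => y (k : ℕ))).val : ℤ) - ((y 0).val : ℤ)

def win (x : ℤ → Fin 2) (p : ℤ) : ℤ → Fin 2 := fun j => x (p + j)

theorem GG_congr {r : ℕ} (f : (Fin (r + 2) → Fin 2) → Fin 2) {y z : ℤ → Fin 2}
    (h : ∀ j : ℤ, 0 ≤ j → j ≤ r + 1 → y j = z j) : GG (r + 2) f y = GG (r + 2) f z := by
  unfold GG
  rw [h 0 le_rfl (by positivity)]
  congr 4
  funext k
  exact h _ (by positivity) (by have := k.2; omega)

theorem LCons_iff (n : ℕ) (f : (Fin n → Fin 2) → Fin 2) (L : ℕ) :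
    LCons n f L ↔ ∀ x : ℤ → Fin 2, (∀ i : ℤ, x (i + L) = x i) →
      ∑ i ∈ Finset.range L, GG n f (win x (i : ℤ)) = 0 := by
  unfold LCons
  refine forall_congr' fun x => forall_congr' fun hx => ?_
  have hp : ∀ i : ℤ, GG n f (win x (i + L)) = GG n f (win x i) := by
    intro i
    congr 1
    funext j
    simp only [win]
    rw [← hx (i + j)]; congr 1; ring
  rw [← shift_sum L (fun i => GG n f (win x i)) hp 1]
  simp only [GG, win, Finset.sum_sub_distrib, add_zero]
  rw [sub_eq_zero]
  norm_cast

theorem base {r : ℕ} {f : (Fin (r + 2) → Fin 2) → Fin 2} (h : LCons (r + 2) f (2 * r + 2))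
    (y : ℤ → Fin 2) (v : ℤ → Fin 2) (hv : v = fun j => y (j % (2 * r + 2))) :
    GG (r + 2) f (win v (-(r + 1))) + ∑ i ∈ Finset.range r, GG (r + 2) f (win v (-((i : ℤ) + 1)))
      + GG (r + 2) f (win v 0) + ∑ i ∈ Finset.range r, GG (r + 2) f (win v ((i : ℤ) + 1)) = 0 := by
  have hper : ∀ i : ℤ, v (i + (2 * r + 2 : ℕ)) = v i := by
    intro i
    rw [hv]; simp
  have hs := (LCons_iff _ _ _).1 h v hper
  have hp : ∀ i : ℤ, GG (r + 2) f (win v (i + (2 * r + 2 : ℕ))) = GG (r + 2) f (win v i) := by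
    intro i
    congr 1
    funext j
    simp only [win]
    rw [← hper (i + j)]; congr 1; ring
  rw [← shift_sum _ (fun i => GG (r + 2) f (win v i)) hp (-(r + 1))] at hs
  rw [show 2 * r + 2 = (r + 1) + (r + 1) by ring, Finset.sum_range_add,
    Finset.sum_range_succ', Finset.sum_range_succ'] at hs
  rw [← Finset.sum_range_reflect (fun i : ℕ => GG (r + 2) f (win v (-((i : ℤ) + 1))))]
  have a1 : ∑ i ∈ Finset.range r, GG (r + 2) f (win v (-(((r - 1 - i : ℕ) : ℤ) + 1))) =
      ∑ i ∈ Finset.range r, GG (r + 2) f (win v (((i + 1 : ℕ) : ℤ) + -((r : ℤ) + 1))) := by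
    refine Finset.sum_congr rfl fun i hi => ?_
    have := Finset.mem_range.1 hi
    congr 2; omega
  have a2 : ∑ i ∈ Finset.range r, GG (r + 2) f (win v ((i : ℤ) + 1)) =
      ∑ i ∈ Finset.range r, GG (r + 2) f (win v (((r + 1 + (i + 1) : ℕ) : ℤ) + -((r : ℤ) + 1))) := by
    refine Finset.sum_congr rfl fun i hi => ?_
    congr 2; push_cast; ring
  rw [a1, a2]
  have a3 : ((0 : ℕ) : ℤ) + -((r : ℤ) + 1) = -((r : ℤ) + 1) := by simp
  have a4 : ((r + 1 + 0 : ℕ) : ℤ) + -((r : ℤ) + 1) = 0 := by push_cast; ring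
  rw [a3, a4] at hs
  linarith

/-- The two-corner word. -/
def WW (r : ℕ) (a b : Fin 2) : ℤ → Fin 2 :=
  fun j => if j = 0 then a else if j = r + 1 then b else 0

theorem emod_pos' {r : ℕ} {j : ℤ} (h0 : 0 ≤ j) (h1 : j < 2 * r + 2) : j % (2 * r + 2) = j :=
  Int.emod_eq_of_lt h0 h1

theorem emod_neg' {r : ℕ} {j : ℤ} (h0 : j < 0) (h1 : -(2 * r + 2) ≤ j) :
    j % (2 * r + 2) = j + (2 * r + 2) := by
  rw [← Int.add_emod_right]
  exact Int.emod_eq_of_lt (by omega) (by omega)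

theorem corner {r : ℕ} {f : (Fin (r + 2) → Fin 2) → Fin 2} (h : LCons (r + 2) f (2 * r + 2))
    (a b : Fin 2) :
    GG (r + 2) f (WW r a b) - GG (r + 2) f (WW r a 0) =
      GG (r + 2) f (WW r 0 b) - GG (r + 2) f (WW r 0 0) := by
  have key : ∀ a b : Fin 2, GG (r + 2) f (WW r b a)
      + ∑ i ∈ Finset.range r, GG (r + 2) f (fun j => if j = i + 1 then a else 0)
      + GG (r + 2) f (WW r a b)
      + ∑ i ∈ Finset.range r, GG (r + 2) f (fun j => if j = r - i then b else 0) = 0 := by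
    intro a b
    refine Eq.trans ?_ (base h (WW r a b) _ rfl)
    congr 1
    · congr 1
      · congr 1
        · apply GG_congr
          intro j h0 h1
          simp only [win]
          rcases lt_or_ge j (r + 1) with hj | hj
          · rw [emod_neg' (by omega) (by omega)]
            unfold WW; split_ifs <;> first | rfl | omega
          · rw [emod_pos' (by omega) (by omega)]
            unfold WW; split_ifs <;> first | rfl | omega
        · refine Finset.sum_congr rfl fun i hi => ?_
          have := Finset.mem_range.1 hi
          apply GG_congr
          intro j h0 h1
          simp only [win]
          rcases lt_or_ge j (i + 1) with hj | hj
          · rw [emod_neg' (by omega) (by omega)]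
            unfold WW; split_ifs <;> first | rfl | omega
          · rw [emod_pos' (by omega) (by omega)]
            unfold WW; split_ifs <;> first | rfl | omega
      · apply GG_congr
        intro j h0 h1
        simp only [win]
        rw [emod_pos' (by omega) (by omega)]
        simp
    · refine Finset.sum_congr rfl fun i hi => ?_
      have := Finset.mem_range.1 hi
      apply GG_congr
      intro j h0 h1
      simp only [win]
      rw [emod_pos' (by omega) (by omega)]
      unfold WW; split_ifs <;> first | rfl | omega
  have k1 := key a b
  have k00 := key 0 0
  have k2 := key a 0
  have k3 := key 0 b
  have hb : ∀ c : Fin 2, c = 0 ∨ c = 1 := by decide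
  rcases hb a with rfl | rfl
  · ring
  · rcases hb b with rfl | rfl
    · ring
    · linarith

theorem localid {r : ℕ} {f : (Fin (r + 2) → Fin 2) → Fin 2} (h : LCons (r + 2) f (2 * r + 2))
    (y : ℤ → Fin 2) :
    ∑ k ∈ Finset.range (r + 2), (GG (r + 2) f (win (fun j => if j < 0 then 0 else y j) (-(k : ℤ)))
      - GG (r + 2) f (win (fun j => if j < 1 then 0 else y j) (-(k : ℤ)))) = 0 := by
  have gen : ∀ c : ℤ, 0 ≤ c → c ≤ 1 →
      GG (r + 2) f (WW r (y (r + 1)) (if c = 0 then y 0 else 0))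
      + ∑ i ∈ Finset.range r, GG (r + 2) f (win (fun j => if j < c then 0 else y j) (-((i : ℤ) + 1)))
      + GG (r + 2) f (win (fun j => if j < c then 0 else y j) 0)
      + ∑ i ∈ Finset.range r, GG (r + 2) f
          (win (fun j => if j ≤ r + 1 then y j else 0) ((i : ℤ) + 1)) = 0 := by
    intro c hc0 hc1
    refine Eq.trans ?_ (base h (fun j => if j < c then 0 else if j ≤ r + 1 then y j else 0) _ rfl)
    congr 1
    · congr 1
      · congr 1
        · apply GG_congr
          intro j h0 h1
          simp only [win]
          rcases lt_or_ge j (r + 1) with hj | hj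
          · rw [emod_neg' (by omega) (by omega)]
            unfold WW
            rcases eq_or_lt_of_le h0 with rfl | h0'
            · rw [if_pos rfl, if_neg (by omega), if_pos (by omega)]
              congr 1; ring
            · rw [if_neg (by omega), if_neg (by omega), if_neg (by omega), if_neg (by omega)]
          · obtain rfl : j = r + 1 := by omega
            rw [emod_pos' (by omega) (by omega)]
            unfold WW
            rw [if_neg (by omega), if_pos rfl]
            simp only [neg_add_cancel]
            split_ifs <;> first | rfl | omega
        · refine Finset.sum_congr rfl fun i hi => ?_
          have := Finset.mem_range.1 hi
          apply GG_congr
          intro j h0 h1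
          simp only [win]
          rcases lt_or_ge j (i + 1) with hj | hj
          · rw [emod_neg' (by omega) (by omega)]
            split_ifs <;> first | rfl | omega
          · rw [emod_pos' (by omega) (by omega)]
            split_ifs <;> first | rfl | omega
      · apply GG_congr
        intro j h0 h1
        simp only [win]
        rw [emod_pos' (by omega) (by omega)]
        split_ifs <;> first | rfl | omega
    · refine Finset.sum_congr rfl fun i hi => ?_
      have := Finset.mem_range.1 hi
      apply GG_congr
      intro j h0 h1
      simp only [win]
      rw [emod_pos' (by omega) (by omega)]
      split_ifs <;> first | rfl | omega
  have g0 := gen 0 (by norm_num) (by norm_num)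
  have g1 := gen 1 (by norm_num) (by norm_num)
  have hc := corner h (y (r + 1)) (y 0)
  rw [if_pos rfl] at g0
  rw [if_neg (by norm_num)] at g1
  have e0 : GG (r + 2) f (win (fun j => if j < 0 then 0 else y j) (-((r + 1 : ℕ) : ℤ))) =
      GG (r + 2) f (WW r 0 (y 0)) := by
    apply GG_congr
    intro j h0 h1
    simp only [win, WW]
    rcases lt_or_ge j (r + 1) with hj | hj
    · split_ifs <;> first | rfl | (exfalso; push_cast at *; omega)
    · obtain rfl : j = r + 1 := by omega
      rw [if_neg (by push_cast; omega), if_neg (by omega), if_pos rfl]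
      congr 1; push_cast; ring
  have e1 : GG (r + 2) f (win (fun j => if j < 1 then 0 else y j) (-((r + 1 : ℕ) : ℤ))) =
      GG (r + 2) f (WW r 0 0) := by
    apply GG_congr
    intro j h0 h1
    simp only [win, WW]
    split_ifs <;> first | rfl | (exfalso; push_cast at *; omega)
  rw [Finset.sum_range_succ, Finset.sum_range_succ', e0, e1, Finset.sum_sub_distrib]
  simp only [Nat.cast_add, Nat.cast_one, Nat.cast_zero, neg_zero] at *
  linarith

theorem stmt_2 (n : ℕ) (hn : 2 ≤ n) (f : (Fin n → Fin 2) → Fin 2)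
    (h1 : LCons n f (2 * n - 3)) (h2 : LCons n f (2 * n - 2)) :
    ∀ L : ℕ, 0 < L → LCons n f L := by
  obtain ⟨r, rfl⟩ : ∃ r, n = r + 2 := ⟨n - 2, by omega⟩
  have h : LCons (r + 2) f (2 * r + 2) := by
    rwa [show 2 * (r + 2) - 2 = 2 * r + 2 by omega] at h2
  intro L _
  rw [LCons_iff]
  intro x hx
  -- value at the zero word
  have hz : GG (r + 2) f (fun _ => 0) = 0 := by
    have this : ∑ i ∈ Finset.range (2 * r + 2), GG (r + 2) f (fun _ => 0) = 0 :=
      (LCons_iff _ _ _).1 h (fun _ => 0) (fun _ => rfl)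
    simp only [Finset.sum_const, Finset.card_range, nsmul_eq_mul] at this
    rcases mul_eq_zero.1 this with h | h
    · norm_cast at h
    · exact h
  let T : ℕ → ℤ → ℤ := fun k i => GG (r + 2) f (fun j => if j < k then 0 else x (i + j))
  have hT : ∀ k i, T k (i + L) = T k i := by
    intro k i
    simp only [T]
    congr 1
    funext j
    rw [← hx (i + j), show i + L + j = i + j + L by ring]
  have hid : ∀ i : ℤ, ∑ k ∈ Finset.range (r + 2), (T k (i + -(k : ℤ)) - T (k + 1) (i + -(k : ℤ))) = 0 := by
    intro i
    rw [← localid h (win x i)]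
    refine Finset.sum_congr rfl fun k _ => ?_
    simp only [T]
    congr 1
    · congr 1
      funext j
      simp only [win]
      rw [add_assoc]
      exact if_congr (by omega) rfl rfl
    · congr 1
      funext j
      simp only [win]
      rw [add_assoc]
      exact if_congr (by push_cast; omega) rfl rfl
  have hsum : ∑ i ∈ Finset.range L, ∑ k ∈ Finset.range (r + 2),
      (T k ((i : ℤ) + -(k : ℤ)) - T (k + 1) ((i : ℤ) + -(k : ℤ))) = 0 :=
    Finset.sum_eq_zero fun i _ => hid i
  rw [Finset.sum_comm] at hsum
  have hs2 : ∀ k ∈ Finset.range (r + 2), ∑ i ∈ Finset.range L,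
      (T k ((i : ℤ) + -(k : ℤ)) - T (k + 1) ((i : ℤ) + -(k : ℤ))) =
      ∑ i ∈ Finset.range L, T k (i : ℤ) - ∑ i ∈ Finset.range L, T (k + 1) (i : ℤ) := by
    intro k _
    rw [Finset.sum_sub_distrib, shift_sum L (T k) (hT k), shift_sum L (T (k + 1)) (hT (k + 1))]
  rw [Finset.sum_congr rfl hs2,
    Finset.sum_range_sub' (fun k => ∑ i ∈ Finset.range L, T k (i : ℤ))] at hsum
  have hlast : ∑ i ∈ Finset.range L, T (r + 2) (i : ℤ) = 0 := by
    refine Finset.sum_eq_zero fun i _ => ?_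
    rw [← hz]
    apply GG_congr
    intro j h0 h1
    exact if_pos (by push_cast; omega)
  have hfirst : ∑ i ∈ Finset.range L, T 0 (i : ℤ) =
      ∑ i ∈ Finset.range L, GG (r + 2) f (win x (i : ℤ)) := by
    refine Finset.sum_congr rfl fun i _ => ?_
    apply GG_congr
    intro j h0 h1
    exact if_neg (by push_cast; omega)
  rw [← hfirst]

  linarith
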